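/- arXiv:2203.08375 — 2 statements merged into one kernel-verified Lean document; each statement's English description precedes it below -/
import Mathlib

section
/- For every d∈(0,1], the function φ̄_d belongs to U_d and is the unique minimizer of the energy J_d over U_d: J_d(φ̄_d)≤J_d(ψ) for every ψ∈U_d, with equality only if ψ=φ̄_d on [0,d]. -/
open Real Set MeasureTheory

noncomputable section

/-- `φ` solves the boundary value problem `φ'' = f(φ)` on `(0,d)`, `φ(0) = 0`,
`φ(d) = Q`, `0 < φ < Q` on `(0,d)`, with `φ ∈ C²((0,d)) ∩ C¹([0,d])`. -/
def IsBVPSol (Q : ℝ) (f : ℝ → ℝ) (d : ℝ) (φ : ℝ → ℝ) : Prop :=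
  ContDiffOn ℝ 1 φ (Set.Icc 0 d) ∧ ContDiffOn ℝ 2 φ (Set.Ioo 0 d) ∧
  (∀ x ∈ Set.Ioo (0 : ℝ) d, deriv (deriv φ) x = f (φ x)) ∧
  φ 0 = 0 ∧ φ d = Q ∧ (∀ x ∈ Set.Ioo (0 : ℝ) d, 0 < φ x ∧ φ x < Q)

/-- `ψ ∈ U_d` with a.e. derivative `g`: `ψ` is absolutely continuous on `[0,d]`
(it is the indefinite integral of `g`, with `g ∈ L²(0,d)`), `ψ(0) = 0` (from the
representation) and `ψ(d) = Q`. -/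
def UdRep (Q d : ℝ) (ψ g : ℝ → ℝ) : Prop :=
  MeasureTheory.IntegrableOn (fun s => (g s) ^ 2) (Set.Icc (0 : ℝ) d) volume ∧
  (∀ x ∈ Set.Icc (0 : ℝ) d, ψ x = ∫ s in (0 : ℝ)..x, g s) ∧ ψ d = Q

/-- The energy `J_d(ψ) = ∫₀^d (|ψ'|²/2 + F(ψ))` computed with a.e. derivative `g`. -/
def Jd (F : ℝ → ℝ) (d : ℝ) (ψ g : ℝ → ℝ) : ℝ :=
  ∫ s in (0 : ℝ)..d, ((g s) ^ 2 / 2 + F (ψ s))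

/-!
Along `φ̄_d` the quantity `|φ'|²/2 - F(φ)` is a constant `E ≥ -min F`, so `φ̄_d` solves the
autonomous equation `φ' = G(φ)` with `G = √(2(F + E))`. For `ψ ∈ U_d`, the identity
`|ψ'|²/2 + F(ψ) = |ψ' - G(ψ)|²/2 + G(ψ)ψ' - E` together with `∫₀^d G(ψ)ψ' = ∫₀^Q G` shows that
`J_d(ψ)` exceeds a constant independent of `ψ` by `½∫₀^d |ψ' - G(ψ)|²`, which vanishes for `φ̄_d`.
In the equality case `ψ' = G(ψ)` as well. Both functions then need the same time to cross `(0, Q)`;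
since `φ̄_d` uses all of `[0, d]` for the crossing, `ψ` cannot wait at `0` or at `Q`, hence
`ψ = φ̄_d`.
-/

section AbsolutelyContinuous

variable {u : ℝ → ℝ} {a b : ℝ}

lemma absolutelyContinuousOnInterval_comp_of_lipschitzOnWith {X Y : Type*} [PseudoMetricSpace X]
    [PseudoMetricSpace Y] {v : ℝ → X} {Γ : X → Y} {K : NNReal} {t : Set X}
    (hΓ : LipschitzOnWith K Γ t) (hv : AbsolutelyContinuousOnInterval v a b)
    (ht : MapsTo v (uIcc a b) t) : AbsolutelyContinuousOnInterval (Γ ∘ v) a b := by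
  have hlim := Filter.Tendsto.const_mul (K : ℝ) hv
  rw [mul_zero] at hlim
  refine squeeze_zero' (.of_forall fun E => Finset.sum_nonneg fun i _ => dist_nonneg) ?_ hlim
  filter_upwards [Filter.mem_inf_of_right (Filter.mem_principal_self _)] with E hE
  rw [Finset.mul_sum]
  exact Finset.sum_le_sum fun i hi =>
    hΓ.dist_le_mul _ (ht (hE.1 i hi).1) _ (ht (hE.1 i hi).2)

lemma integral_comp_mul_deriv_of_absolutelyContinuousOnInterval {G : ℝ → ℝ} (hG : Continuous G)
    (hu : AbsolutelyContinuousOnInterval u a b) :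
    ∫ x in a..b, G (u x) * deriv u x = ∫ y in u a..u b, G y := by
  set Γ : ℝ → ℝ := fun y => ∫ t in (0 : ℝ)..y, G t
  have hΓ' (y : ℝ) : HasDerivAt Γ (G y) y := (hG.integral_hasStrictDerivAt 0 y).hasDerivAt
  obtain ⟨R, hR⟩ := hu.exists_bound
  obtain ⟨C, hC⟩ := (isCompact_closedBall (0 : ℝ) R).exists_bound_of_continuousOn hG.continuousOn
  have hΓ_lip : LipschitzOnWith C.toNNReal Γ (Metric.closedBall 0 R) :=
    (convex_closedBall 0 R).lipschitzOnWith_of_nnnorm_hasDerivWithin_le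
      (fun y _ => (hΓ' y).hasDerivWithinAt)
      fun y hy => NNReal.coe_le_coe.1 ((hC y hy).trans (Real.le_coe_toNNReal C))
  have hΓu : AbsolutelyContinuousOnInterval (Γ ∘ u) a b :=
    absolutelyContinuousOnInterval_comp_of_lipschitzOnWith hΓ_lip hu fun x hx => by
      simpa using hR x hx
  calc ∫ x in a..b, G (u x) * deriv u x
      = ∫ x in a..b, deriv (Γ ∘ u) x := by
        refine intervalIntegral.integral_congr_ae ?_
        filter_upwards [hu.ae_differentiableAt] with x hx hxab
        exact ((hΓ' (u x)).comp x (hx (uIoc_subset_uIcc hxab)).hasDerivAt).deriv.symm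
    _ = Γ (u b) - Γ (u a) := hΓu.integral_deriv_eq_sub
    _ = ∫ y in u a..u b, G y :=
        intervalIntegral.integral_interval_sub_left (hG.intervalIntegrable _ _)
          (hG.intervalIntegrable _ _)

lemma integral_comp_integral_mul {G g : ℝ → ℝ} (hG : Continuous G)
    (hg : IntervalIntegrable g volume a b) :
    ∫ x in a..b, G (∫ s in a..x, g s) * g x = ∫ y in (0 : ℝ)..(∫ s in a..b, g s), G y := by
  have hac := hg.absolutelyContinuousOnInterval_intervalIntegral left_mem_uIcc
  have h := integral_comp_mul_deriv_of_absolutelyContinuousOnInterval hG hac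
  rw [intervalIntegral.integral_same] at h
  rw [← h]
  refine intervalIntegral.integral_congr_ae ?_
  filter_upwards [hg.ae_hasDerivAt_integral] with x hx hxab
  rw [(hx (uIoc_subset_uIcc hxab) a left_mem_uIcc).deriv]

end AbsolutelyContinuous

section Autonomous

lemma exists_Ioo_mapsTo_Ioo {α δ : Type*} [ConditionallyCompleteLinearOrder α]
    [TopologicalSpace α] [OrderTopology α] [DenselyOrdered α] [LinearOrder δ] [TopologicalSpace δ]
    [OrderClosedTopology δ] {ψ : α → δ} {l r : α} (hlr : l ≤ r) (hψ : ContinuousOn ψ (Icc l r))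
    (hlt : ψ l < ψ r) :
    ∃ a b, l ≤ a ∧ a < b ∧ b ≤ r ∧ ψ a = ψ l ∧ ψ b = ψ r ∧
      MapsTo ψ (Ioo a b) (Ioo (ψ l) (ψ r)) := by
  have hlevel {x : α} (hx : l ≤ x) (c : δ) : IsCompact (Icc x r ∩ ψ ⁻¹' {c}) :=
    isCompact_Icc.of_isClosed_subset
      ((hψ.mono (Icc_subset_Icc_left hx)).preimage_isClosed_of_isClosed isClosed_Icc
        isClosed_singleton) inter_subset_left
  obtain ⟨a, ⟨ha, hψa : ψ a = ψ l⟩, ha_max⟩ :=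
    (hlevel le_rfl (ψ l)).exists_isGreatest ⟨l, left_mem_Icc.2 hlr, rfl⟩
  obtain ⟨b, ⟨hb, hψb : ψ b = ψ r⟩, hb_min⟩ :=
    (hlevel ha.1 (ψ r)).exists_isLeast ⟨r, right_mem_Icc.2 ha.2, rfl⟩
  have hab : a < b := hb.1.lt_of_ne fun h => hlt.ne (by rw [← hψa, h, hψb])
  refine ⟨a, b, ha.1, hab, hb.2, hψa, hψb, fun x hx => ⟨?_, ?_⟩⟩ <;> by_contra! hle
  · obtain ⟨y, hy, hψy⟩ := intermediate_value_Icc (hx.2.le.trans hb.2)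
      (hψ.mono (Icc_subset_Icc_left (ha.1.trans hx.1.le))) ⟨hle, hlt.le⟩
    exact hx.1.not_ge (hy.1.trans (ha_max ⟨⟨ha.1.trans (hx.1.le.trans hy.1), hy.2⟩, hψy⟩))
  · obtain ⟨y, hy, hψy⟩ := intermediate_value_Icc hx.1.le
      (hψ.mono (Icc_subset_Icc ha.1 (hx.2.le.trans hb.2))) ⟨hψa.trans_le hlt.le, hle⟩
    exact hx.2.not_ge ((hb_min ⟨⟨hy.1, hy.2.trans (hx.2.le.trans hb.2)⟩, hψy⟩).trans hy.2)

lemma exists_hasDerivAt_of_continuousOn_Ioo {h : ℝ → ℝ} {A B : ℝ} (hh : ContinuousOn h (Ioo A B)) :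
    ∃ H : ℝ → ℝ, ∀ y ∈ Ioo A B, HasDerivAt H (h y) y := by
  refine ⟨fun y => ∫ t in ((A + B) / 2)..y, h t, fun y hy => ?_⟩
  have hmid : (A + B) / 2 ∈ Ioo A B := ⟨by linarith [hy.1, hy.2], by linarith [hy.1, hy.2]⟩
  exact intervalIntegral.integral_hasDerivAt_right
    (hh.mono (ordConnected_Ioo.uIcc_subset hmid hy)).intervalIntegrable
    (hh.stronglyMeasurableAtFilter isOpen_Ioo y hy) (hh.continuousAt (isOpen_Ioo.mem_nhds hy))

lemma exists_comp_eq_add_of_hasDerivAt_autonomous {G T v : ℝ → ℝ} {l r : ℝ} {s : Set ℝ}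
    (hG : ∀ y ∈ s, G y ≠ 0) (hT : ∀ y ∈ s, HasDerivAt T (G y)⁻¹ y)
    (hv : ∀ x ∈ Ioo l r, HasDerivAt v (G (v x)) x) (hvs : MapsTo v (Ioo l r) s) :
    ∃ c, ∀ x ∈ Ioo l r, T (v x) = x + c := by
  have hder : ∀ x ∈ Ioo l r, HasDerivAt (fun x => T (v x) - x) 0 x := by
    intro x hx
    have h := ((hT (v x) (hvs hx)).comp x (hv x hx)).sub (hasDerivAt_id x)
    rwa [inv_mul_cancel₀ (hG _ (hvs hx)), sub_self] at h
  obtain ⟨c, hc⟩ := isOpen_Ioo.exists_is_const_of_deriv_eq_zero isPreconnected_Ioo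
    (fun x hx => (hder x hx).differentiableAt.differentiableWithinAt) fun x hx => (hder x hx).deriv
  exact ⟨c, fun x hx => sub_eq_iff_eq_add'.1 (hc x hx)⟩

/-- `G` may vanish at the two boundary values, so `ψ` could a priori rest there; it cannot, because
`φ` spends all of `[l, r]` crossing the open interval between them. -/
lemma eqOn_Icc_of_hasDerivAt_autonomous {G φ ψ : ℝ → ℝ} {l r : ℝ} (hlr : l < r)
    (hG : ContinuousOn G (Ioo (φ l) (φ r))) (hG0 : ∀ y ∈ Ioo (φ l) (φ r), G y ≠ 0)
    (hφ : ∀ x ∈ Ioo l r, HasDerivAt φ (G (φ x)) x)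
    (hφ_maps : MapsTo φ (Ioo l r) (Ioo (φ l) (φ r)))
    (hψc : ContinuousOn ψ (Icc l r)) (hψ : ∀ x ∈ Ioo l r, HasDerivAt ψ (G (ψ x)) x)
    (hl : ψ l = φ l) (hr : ψ r = φ r) : EqOn ψ φ (Icc l r) := by
  obtain ⟨m, hm⟩ := nonempty_Ioo.2 hlr
  have hlt : ψ l < ψ r := by
    rw [hl, hr]
    exact (hφ_maps hm).1.trans (hφ_maps hm).2
  obtain ⟨a, b, hla, hab, hbr, hψa, hψb, hψ_maps⟩ := exists_Ioo_mapsTo_Ioo hlr.le hψc hlt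
  rw [hl] at hψa hψ_maps
  rw [hr] at hψb hψ_maps
  obtain ⟨T, hT⟩ := exists_hasDerivAt_of_continuousOn_Ioo (hG.inv₀ hG0)
  obtain ⟨cφ, hcφ⟩ := exists_comp_eq_add_of_hasDerivAt_autonomous hG0 hT hφ hφ_maps
  obtain ⟨cψ, hcψ⟩ := exists_comp_eq_add_of_hasDerivAt_autonomous hG0 hT
    (fun x hx => hψ x (Ioo_subset_Ioo hla hbr hx)) hψ_maps
  have hshift : ∀ y ∈ Ioo l r, ∃ x ∈ Ioo a b, ψ x = φ y ∧ x + cψ = y + cφ := by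
    intro y hy
    obtain ⟨x, hx, hxy⟩ := intermediate_value_Ioo hab.le (hψc.mono (Icc_subset_Icc hla hbr))
      (show φ y ∈ Ioo (ψ a) (ψ b) by rw [hψa, hψb]; exact hφ_maps hy)
    exact ⟨x, hx, hxy, by rw [← hcψ x hx, ← hcφ y hy, hxy]⟩
  have hsub : Ioo l r ⊆ Ioo (a + (cψ - cφ)) (b + (cψ - cφ)) := by
    intro y hy
    obtain ⟨x, hx, -, hxy⟩ := hshift y hy
    exact ⟨by linarith [hx.1], by linarith [hx.2]⟩
  have hc : cψ = cφ := by
    obtain ⟨h₁, h₂⟩ := (Ioo_subset_Ioo_iff hlr).1 hsub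
    linarith
  intro y hy
  rcases eq_endpoints_or_mem_Ioo_of_mem_Icc hy with rfl | rfl | hy
  · exact hl
  · exact hr
  · obtain ⟨x, -, hψx, hxy⟩ := hshift y hy
    obtain rfl : x = y := by rwa [hc, add_left_inj] at hxy
    exact hψx

end Autonomous

lemma deriv_pos_of_deriv_ne_zero {φ : ℝ → ℝ} {a b : ℝ} (hφc : ContinuousOn φ (Icc a b))
    (hab : a ≤ b) (hlt : φ a < φ b) (hφ : ∀ x ∈ Ioo a b, deriv φ x ≠ 0) :
    ∀ x ∈ Ioo a b, 0 < deriv φ x := by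
  refine (hasDerivWithinAt_forall_lt_or_forall_gt_of_forall_ne (convex_Ioo a b)
    (fun x hx => (differentiableAt_of_deriv_ne_zero (hφ x hx)).hasDerivAt.hasDerivWithinAt)
    hφ).resolve_left fun hneg => hlt.not_ge ?_
  refine (strictAntiOn_of_deriv_neg (convex_Icc a b) hφc ?_).antitoneOn (left_mem_Icc.2 hab)
    (right_mem_Icc.2 hab) hab
  rwa [interior_Icc]

/-- `F` is a potential of the force `f` on `(0, Q)` attaining its global minimum at `0` and nowhere
in `(0, Q)`. These are the properties of the paper's `F` on which minimality of `φ̄_d` rests. -/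
structure IsBarrierPotential (Q : ℝ) (f F : ℝ → ℝ) : Prop where
  continuous : Continuous F
  hasDerivAt : ∀ s ∈ Ioo 0 Q, HasDerivAt F (f s) s
  zero_le : ∀ s, F 0 ≤ F s
  zero_lt : ∀ s ∈ Ioo 0 Q, F 0 < F s

/-- The speed `√(2(F(y) + E))` at position `y` of a motion `u` with `|u'|²/2 - F(u) = E`. The
square root is `0` at positions with `F(y) < -E`, which such a motion never visits. -/
def speed (F : ℝ → ℝ) (E y : ℝ) : ℝ := √(2 * (F y + E))

section Speed

variable {F : ℝ → ℝ} {E : ℝ}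

lemma continuous_speed (hF : Continuous F) : Continuous (speed F E) :=
  ((hF.add continuous_const).const_mul 2).sqrt

lemma speed_sq {y : ℝ} (h : 0 ≤ F y + E) : speed F E y ^ 2 = 2 * (F y + E) :=
  Real.sq_sqrt (by positivity)

end Speed

section FirstIntegral

variable {Q d E : ℝ} {f F φ : ℝ → ℝ}

lemma IsBVPSol.mapsTo (hφ : IsBVPSol Q f d φ) : MapsTo φ (Ioo 0 d) (Ioo 0 Q) :=
  hφ.2.2.2.2.2

lemma IsBVPSol.boundaryValue_pos (hφ : IsBVPSol Q f d φ) (hd : 0 < d) : 0 < Q := by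
  obtain ⟨x, hx⟩ := nonempty_Ioo.2 hd
  exact (hφ.mapsTo hx).1.trans (hφ.mapsTo hx).2

lemma IsBVPSol.hasDerivAt (hφ : IsBVPSol Q f d φ) {x : ℝ} (hx : x ∈ Ioo 0 d) :
    HasDerivAt φ (deriv φ x) x :=
  ((hφ.2.1.differentiableOn two_ne_zero).differentiableAt (isOpen_Ioo.mem_nhds hx)).hasDerivAt

lemma IsBVPSol.hasDerivAt_deriv (hφ : IsBVPSol Q f d φ) {x : ℝ} (hx : x ∈ Ioo 0 d) :
    HasDerivAt (deriv φ) (f (φ x)) x := by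
  obtain ⟨-, hC2, hode, -⟩ := hφ
  have hC1 : ContDiffOn ℝ 1 (deriv φ) (Ioo 0 d) := hC2.deriv_of_isOpen isOpen_Ioo (by norm_num)
  rw [← hode x hx]
  exact ((hC1.differentiableOn one_ne_zero).differentiableAt (isOpen_Ioo.mem_nhds hx)).hasDerivAt

lemma IsBVPSol.exists_deriv_sq_eq (hφ : IsBVPSol Q f d φ)
    (hF : ∀ s ∈ Ioo 0 Q, HasDerivAt F (f s) s) :
    ∃ E, ∀ x ∈ Ioo 0 d, deriv φ x ^ 2 = 2 * (F (φ x) + E) := by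
  have hder : ∀ x ∈ Ioo 0 d, HasDerivAt (fun x => deriv φ x ^ 2 / 2 - F (φ x)) 0 x := by
    intro x hx
    have h := (((hφ.hasDerivAt_deriv hx).pow 2).div_const 2).sub
      ((hF (φ x) (hφ.mapsTo hx)).comp x (hφ.hasDerivAt hx))
    convert! h using 1
    ring
  obtain ⟨E, hE⟩ := isOpen_Ioo.exists_is_const_of_deriv_eq_zero isPreconnected_Ioo
    (fun x hx => (hder x hx).differentiableAt.differentiableWithinAt) fun x hx => (hder x hx).deriv
  exact ⟨E, fun x hx => by linarith [hE x hx]⟩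

lemma IsBVPSol.neg_le_energy (hφ : IsBVPSol Q f d φ) (hd : 0 < d) (hF : Continuous F)
    (hE : ∀ x ∈ Ioo 0 d, deriv φ x ^ 2 = 2 * (F (φ x) + E)) : -F 0 ≤ E := by
  have h0 : (0 : ℝ) ∈ closure (Ioo 0 d) := by
    rw [closure_Ioo hd.ne]
    exact left_mem_Icc.2 hd.le
  have hcont : ContinuousOn (fun x => -F (φ x)) (closure (Ioo 0 d)) := by
    rw [closure_Ioo hd.ne]
    exact (hF.comp_continuousOn hφ.1.continuousOn).neg
  have hle : ∀ x ∈ Ioo 0 d, -F (φ x) ≤ E := fun x hx => by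
    linarith [hE x hx, sq_nonneg (deriv φ x)]
  have h := le_on_closure hle hcont continuousOn_const h0
  rwa [hφ.2.2.2.1] at h

lemma IsBVPSol.exists_hasDerivAt_speed (hφ : IsBVPSol Q f d φ) (hd : 0 < d)
    (hF : IsBarrierPotential Q f F) :
    ∃ E, -F 0 ≤ E ∧ ∀ x ∈ Ioo 0 d, HasDerivAt φ (speed F E (φ x)) x := by
  obtain ⟨E, hE⟩ := hφ.exists_deriv_sq_eq hF.hasDerivAt
  have hE0 : -F 0 ≤ E := hφ.neg_le_energy hd hF.continuous hE
  have hlt : φ 0 < φ d := by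
    rw [hφ.2.2.2.1, hφ.2.2.2.2.1]
    exact hφ.boundaryValue_pos hd
  have hne : ∀ x ∈ Ioo 0 d, deriv φ x ≠ 0 := fun x hx h => by
    have h_sq := hE x hx
    rw [h] at h_sq
    linarith [hF.zero_lt _ (hφ.mapsTo hx)]
  have hpos := deriv_pos_of_deriv_ne_zero hφ.1.continuousOn hd.le hlt hne
  refine ⟨E, hE0, fun x hx => ?_⟩
  rw [speed, ← hE x hx, Real.sqrt_sq (hpos x hx).le]
  exact hφ.hasDerivAt hx

end FirstIntegral

section Energy

variable {Q d E : ℝ} {F G ψ g : ℝ → ℝ}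

lemma UdRep.of_hasDerivAt (hψc : ContinuousOn ψ (Icc 0 d)) (hg : ContinuousOn g (Icc 0 d))
    (hψ : ∀ x ∈ Ioo 0 d, HasDerivAt ψ (g x) x) (h0 : ψ 0 = 0) (hψd : ψ d = Q) :
    UdRep Q d ψ g := by
  refine ⟨(hg.pow 2).integrableOn_Icc, fun x hx => ?_, hψd⟩
  have hsub : Icc 0 x ⊆ Icc 0 d := Icc_subset_Icc_right hx.2
  rw [intervalIntegral.integral_eq_sub_of_hasDerivAt_of_le hx.1 (hψc.mono hsub)
    (fun y hy => hψ y ⟨hy.1, hy.2.trans_le hx.2⟩)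
    ((hg.mono hsub).intervalIntegrable_of_Icc hx.1), h0, sub_zero]

lemma UdRep.apply_zero (h : UdRep Q d ψ g) (hd : 0 ≤ d) : ψ 0 = 0 := by
  rw [h.2.1 0 (left_mem_Icc.2 hd), intervalIntegral.integral_same]

lemma UdRep.integral_eq (h : UdRep Q d ψ g) (hd : 0 ≤ d) : ∫ s in (0 : ℝ)..d, g s = Q := by
  rw [← h.2.1 d (right_mem_Icc.2 hd), h.2.2]

/-- Integrability of `g ^ 2` does not make `g` measurable; here integrability of `g` comes from
`∫ g = Q ≠ 0`, as the integral of a non-integrable function is `0` by convention. -/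
lemma UdRep.intervalIntegrable (h : UdRep Q d ψ g) (hQ : Q ≠ 0) (hd : 0 ≤ d) :
    IntervalIntegrable g volume 0 d := by
  by_contra hg
  exact hQ (by rw [← h.integral_eq hd, intervalIntegral.integral_undef hg])

lemma UdRep.continuousOn (h : UdRep Q d ψ g) (hQ : Q ≠ 0) (hd : 0 ≤ d) :
    ContinuousOn ψ (uIcc 0 d) :=
  (intervalIntegral.continuousOn_primitive_interval' (h.intervalIntegrable hQ hd)
    left_mem_uIcc).congr (by rw [uIcc_of_le hd]; exact h.2.1)

lemma UdRep.intervalIntegrable_sq (h : UdRep Q d ψ g) (hd : 0 ≤ d) :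
    IntervalIntegrable (fun s => g s ^ 2) volume 0 d :=
  (intervalIntegrable_iff_integrableOn_Icc_of_le hd).2 h.1

lemma UdRep.intervalIntegrable_comp_mul (h : UdRep Q d ψ g) (hQ : Q ≠ 0) (hd : 0 ≤ d)
    (hG : Continuous G) : IntervalIntegrable (fun s => G (ψ s) * g s) volume 0 d :=
  (h.intervalIntegrable hQ hd).continuousOn_mul (hG.comp_continuousOn (h.continuousOn hQ hd))

lemma UdRep.intervalIntegrable_sub_comp_sq (h : UdRep Q d ψ g) (hQ : Q ≠ 0) (hd : 0 ≤ d)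
    (hG : Continuous G) : IntervalIntegrable (fun s => (g s - G (ψ s)) ^ 2) volume 0 d := by
  have hGψ : IntervalIntegrable (fun s => G (ψ s) ^ 2) volume 0 d :=
    ((hG.comp_continuousOn (h.continuousOn hQ hd)).pow 2).intervalIntegrable
  have hsum := ((h.intervalIntegrable_sq hd).sub
    ((h.intervalIntegrable_comp_mul hQ hd hG).const_mul 2)).add hGψ
  convert hsum using 2 with s
  ring

lemma UdRep.integral_comp_mul (h : UdRep Q d ψ g) (hQ : Q ≠ 0) (hd : 0 ≤ d) (hG : Continuous G) :
    ∫ s in (0 : ℝ)..d, G (ψ s) * g s = ∫ y in (0 : ℝ)..Q, G y := by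
  rw [← h.integral_eq hd, ← integral_comp_integral_mul hG (h.intervalIntegrable hQ hd)]
  refine intervalIntegral.integral_congr fun x hx => ?_
  rw [uIcc_of_le hd] at hx
  simp only [h.2.1 x hx]

lemma UdRep.Jd_eq (h : UdRep Q d ψ g) (hQ : Q ≠ 0) (hd : 0 ≤ d) (hF : Continuous F)
    (hE : ∀ y, 0 ≤ F y + E) :
    Jd F d ψ g = (∫ y in (0 : ℝ)..Q, speed F E y) - d * E
      + (∫ s in (0 : ℝ)..d, (g s - speed F E (ψ s)) ^ 2) / 2 := by
  have hG : Continuous (speed F E) := continuous_speed hF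
  have hsquare (s : ℝ) : g s ^ 2 / 2 + F (ψ s)
      = speed F E (ψ s) * g s - E + (g s - speed F E (ψ s)) ^ 2 / 2 := by
    linear_combination -speed_sq (hE (ψ s)) / 2
  have hmul := h.intervalIntegrable_comp_mul hQ hd hG
  have hdefect := h.intervalIntegrable_sub_comp_sq hQ hd hG
  simp only [Jd, hsquare]
  rw [intervalIntegral.integral_add (hmul.sub intervalIntegrable_const) (hdefect.div_const 2),
    intervalIntegral.integral_sub hmul intervalIntegrable_const, h.integral_comp_mul hQ hd hG,
    intervalIntegral.integral_const, intervalIntegral.integral_div, smul_eq_mul, sub_zero]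

lemma UdRep.le_Jd (h : UdRep Q d ψ g) (hQ : Q ≠ 0) (hd : 0 ≤ d) (hF : Continuous F)
    (hE : ∀ y, 0 ≤ F y + E) : (∫ y in (0 : ℝ)..Q, speed F E y) - d * E ≤ Jd F d ψ g := by
  rw [h.Jd_eq hQ hd hF hE, le_add_iff_nonneg_right]
  exact div_nonneg (intervalIntegral.integral_nonneg hd fun s _ => sq_nonneg _) zero_le_two

lemma UdRep.ae_eq_speed (h : UdRep Q d ψ g) (hQ : Q ≠ 0) (hd : 0 ≤ d) (hF : Continuous F)
    (hE : ∀ y, 0 ≤ F y + E) (hJ : Jd F d ψ g = (∫ y in (0 : ℝ)..Q, speed F E y) - d * E) :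
    ∀ᵐ s ∂volume.restrict (Ioc 0 d), g s = speed F E (ψ s) := by
  have hzero : ∫ s in (0 : ℝ)..d, (g s - speed F E (ψ s)) ^ 2 = 0 := by
    linarith [h.Jd_eq hQ hd hF hE]
  rw [intervalIntegral.integral_eq_zero_iff_of_le_of_nonneg_ae hd
    (.of_forall fun s => sq_nonneg _)
    (h.intervalIntegrable_sub_comp_sq hQ hd (continuous_speed hF))] at hzero
  filter_upwards [hzero] with s hs
  exact sub_eq_zero.1 (pow_eq_zero_iff two_ne_zero |>.1 hs)

lemma UdRep.hasDerivAt_of_ae_eq (h : UdRep Q d ψ g) {p : ℝ → ℝ} (hp : ContinuousOn p (Icc 0 d))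
    (hgp : ∀ᵐ s ∂volume.restrict (Ioc 0 d), g s = p s) {x : ℝ} (hx : x ∈ Ioo 0 d) :
    HasDerivAt ψ (p x) x := by
  have hψ : ∀ y ∈ Icc 0 d, ψ y = ∫ s in (0 : ℝ)..y, p s := by
    intro y hy
    rw [h.2.1 y hy, intervalIntegral.integral_of_le hy.1, intervalIntegral.integral_of_le hy.1]
    exact integral_congr_ae (ae_restrict_of_ae_restrict_of_subset (Ioc_subset_Ioc_right hy.2) hgp)
  refine HasDerivAt.congr_of_eventuallyEq ?_
    (Filter.mem_of_superset (Icc_mem_nhds hx.1 hx.2) hψ)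
  exact intervalIntegral.integral_hasDerivAt_right
    ((hp.mono (Icc_subset_Icc_right hx.2.le)).intervalIntegrable_of_Icc hx.1.le)
    ((hp.mono Ioo_subset_Icc_self).stronglyMeasurableAtFilter isOpen_Ioo x hx)
    (hp.continuousAt (Icc_mem_nhds hx.1 hx.2))

end Energy

theorem stmt10_general {Q d : ℝ} {f F φ : ℝ → ℝ} (hd : 0 < d) (hF : IsBarrierPotential Q f F)
    (hφ : IsBVPSol Q f d φ) :
    ∃ gφ : ℝ → ℝ, UdRep Q d φ gφ ∧
      ∀ ψ g : ℝ → ℝ, UdRep Q d ψ g →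
        Jd F d φ gφ ≤ Jd F d ψ g ∧ (Jd F d ψ g = Jd F d φ gφ → EqOn ψ φ (Icc 0 d)) := by
  have hQ : Q ≠ 0 := (hφ.boundaryValue_pos hd).ne'
  obtain ⟨E, hE, hφ'⟩ := hφ.exists_hasDerivAt_speed hd hF
  have hφ_maps := hφ.mapsTo
  obtain ⟨hC1, -, -, hφ0, hφd, -⟩ := hφ
  have hFE (y : ℝ) : 0 ≤ F y + E := by linarith [hF.zero_le y]
  have hG : Continuous (speed F E) := continuous_speed hF.continuous
  have hG0 : ∀ y ∈ Ioo (φ 0) (φ d), speed F E y ≠ 0 := fun y hy =>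
    (Real.sqrt_pos.2 (by linarith [hF.zero_lt y (by rwa [hφ0, hφd] at hy)])).ne'
  have hU : UdRep Q d φ fun s => speed F E (φ s) :=
    .of_hasDerivAt hC1.continuousOn (hG.comp_continuousOn hC1.continuousOn) hφ' hφ0 hφd
  have hJφ : Jd F d φ (fun s => speed F E (φ s)) = (∫ y in (0 : ℝ)..Q, speed F E y) - d * E := by
    simp [hU.Jd_eq hQ hd.le hF.continuous hFE]
  refine ⟨_, hU, fun ψ g hψ => ⟨hJφ.trans_le (hψ.le_Jd hQ hd.le hF.continuous hFE), fun hJ => ?_⟩⟩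
  have hψc : ContinuousOn ψ (Icc 0 d) := uIcc_of_le hd.le ▸ hψ.continuousOn hQ hd.le
  have hψ' : ∀ x ∈ Ioo 0 d, HasDerivAt ψ (speed F E (ψ x)) x := fun x hx =>
    hψ.hasDerivAt_of_ae_eq (hG.comp_continuousOn hψc)
      (hψ.ae_eq_speed hQ hd.le hF.continuous hFE (hJ.trans hJφ)) hx
  exact eqOn_Icc_of_hasDerivAt_autonomous hd hG.continuousOn hG0 hφ'
    (by rwa [hφ0, hφd]) hψc hψ' (by rw [hψ.apply_zero hd.le, hφ0]) (by rw [hψ.2.2, hφd])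

/-- The primitive, vanishing at `a`, of the extension of `f` by zero outside `[a, b]`; the paper's
`F` is the case `[a, b] = [0, Q]`. -/
def truncatedPrimitive (f : ℝ → ℝ) (a b t : ℝ) : ℝ := ∫ s in a..t, indicator (Icc a b) f s

section TruncatedPrimitive

variable {f : ℝ → ℝ} {a b : ℝ}

lemma continuous_truncatedPrimitive (hf : IntegrableOn f (Icc a b)) :
    Continuous (truncatedPrimitive f a b) :=
  intervalIntegral.continuous_primitive
    (fun _ _ => (hf.integrable_indicator measurableSet_Icc).intervalIntegrable) a

lemma hasDerivAt_truncatedPrimitive (hf : ContinuousOn f (Icc a b)) {t : ℝ} (ht : t ∈ Ioo a b) :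
    HasDerivAt (truncatedPrimitive f a b) (f t) t := by
  have hev : indicator (Icc a b) f =ᶠ[nhds t] f :=
    (eqOn_indicator (s := Icc a b)).eventuallyEq_of_mem (Icc_mem_nhds ht.1 ht.2)
  have hint := hf.integrableOn_Icc.integrable_indicator measurableSet_Icc (μ := volume)
  rw [← hev.eq_of_nhds]
  exact intervalIntegral.integral_hasDerivAt_right hint.intervalIntegrable
    hint.aestronglyMeasurable.stronglyMeasurableAtFilter
    ((hf.continuousAt (Icc_mem_nhds ht.1 ht.2)).congr hev.symm)

lemma truncatedPrimitive_eq_integral_projIcc (hab : a ≤ b) (t : ℝ) :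
    truncatedPrimitive f a b t = ∫ s in a..projIcc a b hab t, f s := by
  rcases le_total t a with hta | hat
  · rw [projIcc_of_le_left hab hta, intervalIntegral.integral_same, truncatedPrimitive,
      intervalIntegral.integral_symm, intervalIntegral.integral_of_le hta,
      integral_Ioc_eq_integral_Ioo, setIntegral_eq_zero_of_forall_eq_zero, neg_zero]
    exact fun s hs => indicator_of_notMem (fun h => hs.2.not_ge h.1) f
  · have hinter : Ioc a t ∩ Icc a b = Ioc a (min b t) := by
      ext s
      simp only [mem_inter_iff, mem_Ioc, mem_Icc, le_min_iff]
      grind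
    rw [truncatedPrimitive, intervalIntegral.integral_of_le hat,
      setIntegral_indicator measurableSet_Icc, hinter, coe_projIcc,
      max_eq_right (le_min hab hat), intervalIntegral.integral_of_le (le_min hab hat)]

end TruncatedPrimitive

lemma continuousOn_image_of_leftInvOn {X Y : Type*} [TopologicalSpace X] [TopologicalSpace Y]
    [T2Space Y] {p : X → Y} {q : Y → X} {K : Set X} (hK : IsCompact K) (hp : ContinuousOn p K)
    (hqp : LeftInvOn q p K) : ContinuousOn q (p '' K) := by
  refine continuousOn_iff_isClosed.2 fun C hC =>
    ⟨p '' (K ∩ C), ((hK.inter_right hC).image_of_continuousOn (hp.mono inter_subset_left)).isClosed,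
      ?_⟩
  rw [inter_eq_left.2 (image_mono inter_subset_left), inter_comm (q ⁻¹' C)]
  ext y
  constructor
  · rintro ⟨⟨x, hx, rfl⟩, hC⟩
    exact ⟨x, ⟨hx, by rwa [mem_preimage, hqp hx] at hC⟩, rfl⟩
  · rintro ⟨x, ⟨hx, hxC⟩, rfl⟩
    exact ⟨mem_image_of_mem p hx, by rwa [mem_preimage, hqp hx]⟩

/-- The paper's `φ̄₁`. -/
def cubicProfile (Q t : ℝ) : ℝ := Q * (3 * t ^ 2 - 2 * t ^ 3)

/-- The paper's `f`, for `κ` the inverse of the cubic profile on `[0, Q]`. -/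
def cubicForce (Q : ℝ) (κ : ℝ → ℝ) (s : ℝ) : ℝ := 6 * Q * (1 - 2 * κ s)

section Cubic

variable {Q : ℝ} {κ : ℝ → ℝ}

lemma hasDerivAt_cubicProfile (t : ℝ) : HasDerivAt (cubicProfile Q) (6 * Q * t * (1 - t)) t := by
  have h := (((hasDerivAt_pow 2 t).const_mul 3).sub ((hasDerivAt_pow 3 t).const_mul 2)).const_mul Q
  convert! h using 1
  push_cast
  ring

lemma continuous_cubicProfile : Continuous (cubicProfile Q) :=
  continuous_iff_continuousAt.2 fun t => (hasDerivAt_cubicProfile t).continuousAt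

lemma image_cubicProfile (hQ : 0 ≤ Q) : cubicProfile Q '' Icc 0 1 = Icc 0 Q := by
  have h0 : cubicProfile Q 0 = 0 := by simp [cubicProfile]
  have h1 : cubicProfile Q 1 = Q := by norm_num [cubicProfile]
  have hmono : MonotoneOn (cubicProfile Q) (Icc 0 1) := by
    refine monotoneOn_of_hasDerivWithinAt_nonneg (convex_Icc 0 1)
      continuous_cubicProfile.continuousOn (fun t _ => (hasDerivAt_cubicProfile t).hasDerivWithinAt)
      fun t ht => ?_
    rw [interior_Icc] at ht
    have := ht.1
    have : 0 ≤ 1 - t := sub_nonneg.2 ht.2.le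
    positivity
  have h := continuous_cubicProfile.continuousOn.image_Icc_of_monotoneOn zero_le_one hmono
  rwa [h0, h1] at h

lemma continuousOn_cubicForce (hκ : LeftInvOn κ (cubicProfile Q) (Icc 0 1)) (hQ : 0 ≤ Q) :
    ContinuousOn (cubicForce Q κ) (Icc 0 Q) := by
  have hκc := continuousOn_image_of_leftInvOn isCompact_Icc continuous_cubicProfile.continuousOn hκ
  rw [image_cubicProfile hQ] at hκc
  unfold cubicForce
  fun_prop

lemma integral_cubicForce (hκ : LeftInvOn κ (cubicProfile Q) (Icc 0 1)) (hQ : 0 ≤ Q) {t : ℝ}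
    (ht : t ∈ Icc (0 : ℝ) 1) :
    ∫ s in (0 : ℝ)..cubicProfile Q t, cubicForce Q κ s = 18 * Q ^ 2 * (t * (1 - t)) ^ 2 := by
  have hsub : uIcc 0 t ⊆ Icc 0 1 := by
    rw [uIcc_of_le ht.1]
    exact Icc_subset_Icc_right ht.2
  have hsubst := intervalIntegral.integral_comp_mul_deriv' (a := 0) (b := t)
    (fun r _ => hasDerivAt_cubicProfile (Q := Q) r) (by fun_prop)
    ((continuousOn_cubicForce hκ hQ).mono ((image_mono hsub).trans (image_cubicProfile hQ).subset))
  have hprim (r : ℝ) : HasDerivAt (fun r => 18 * Q ^ 2 * (r * (1 - r)) ^ 2)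
      (6 * Q * (1 - 2 * r) * (6 * Q * r * (1 - r))) r := by
    have h := (((hasDerivAt_id r).mul ((hasDerivAt_id r).const_sub 1)).pow 2).const_mul
      (18 * Q ^ 2)
    convert! h using 1
    simp
    ring
  calc ∫ s in (0 : ℝ)..cubicProfile Q t, cubicForce Q κ s
      = ∫ r in (0 : ℝ)..t, cubicForce Q κ (cubicProfile Q r) * (6 * Q * r * (1 - r)) := by
        simpa [cubicProfile] using hsubst.symm
    _ = ∫ r in (0 : ℝ)..t, 6 * Q * (1 - 2 * r) * (6 * Q * r * (1 - r)) :=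
        intervalIntegral.integral_congr fun r hr => by
          simp only [cubicForce, hκ (hsub hr)]
    _ = 18 * Q ^ 2 * (t * (1 - t)) ^ 2 := by
        rw [intervalIntegral.integral_eq_sub_of_hasDerivAt (fun r _ => hprim r)
          (Continuous.intervalIntegrable (by fun_prop) _ _)]
        ring

lemma integral_cubicForce_nonneg (hκ : LeftInvOn κ (cubicProfile Q) (Icc 0 1)) {s : ℝ}
    (hs : s ∈ Icc 0 Q) :
    0 ≤ ∫ r in (0 : ℝ)..s, cubicForce Q κ r := by
  have hQ : 0 ≤ Q := hs.1.trans hs.2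
  obtain ⟨t, ht, rfl⟩ := (image_cubicProfile hQ).superset hs
  rw [integral_cubicForce hκ hQ ht]
  positivity

lemma integral_cubicForce_pos (hκ : LeftInvOn κ (cubicProfile Q) (Icc 0 1)) {s : ℝ}
    (hs : s ∈ Ioo 0 Q) :
    0 < ∫ r in (0 : ℝ)..s, cubicForce Q κ r := by
  have hQ : 0 < Q := hs.1.trans hs.2
  obtain ⟨t, ht, rfl⟩ := (image_cubicProfile hQ.le).superset (Ioo_subset_Icc_self hs)
  have ht0 : t ≠ 0 := by
    rintro rfl
    simp [cubicProfile] at hs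
  have ht1 : 1 - t ≠ 0 := fun h => by
    obtain rfl : t = 1 := by linarith
    norm_num [cubicProfile] at hs
  rw [integral_cubicForce hκ hQ.le ht]
  positivity

lemma isBarrierPotential_cubicForce (hκ : LeftInvOn κ (cubicProfile Q) (Icc 0 1))
    (hQ : 0 ≤ Q) :
    IsBarrierPotential Q (cubicForce Q κ) (truncatedPrimitive (cubicForce Q κ) 0 Q) := by
  have hf := continuousOn_cubicForce hκ hQ
  have h0 : truncatedPrimitive (cubicForce Q κ) 0 Q 0 = 0 := intervalIntegral.integral_same
  refine ⟨continuous_truncatedPrimitive hf.integrableOn_Icc,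
    fun s hs => hasDerivAt_truncatedPrimitive hf hs, fun s => ?_, fun s hs => ?_⟩
  · rw [h0, truncatedPrimitive_eq_integral_projIcc hQ]
    exact integral_cubicForce_nonneg hκ (projIcc 0 Q hQ s).2
  · rw [h0, truncatedPrimitive_eq_integral_projIcc hQ, projIcc_of_mem hQ (Ioo_subset_Icc_self hs)]
    exact integral_cubicForce_pos hκ hs

end Cubic

/-- `φ̄_d` belongs to `U_d` and is the unique minimizer of the energy `J_d` over `U_d`. -/
theorem stmt10
    (Q : ℝ) (hQ : 0 < Q)
    (κ : ℝ → ℝ) (hκ : ∀ t ∈ Set.Icc (0 : ℝ) 1, κ (Q * (3 * t ^ 2 - 2 * t ^ 3)) = t)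
    (f : ℝ → ℝ) (hf : ∀ s : ℝ, f s = 6 * Q * (1 - 2 * κ s))
    (F : ℝ → ℝ) (hF : ∀ t : ℝ, F t = ∫ s in (0 : ℝ)..t, Set.indicator (Set.Icc 0 Q) f s)
    (d : ℝ) (hd : d ∈ Set.Ioc (0 : ℝ) 1)
    (φd : ℝ → ℝ) (hφd : IsBVPSol Q f d φd) :
    ∃ gφ : ℝ → ℝ, UdRep Q d φd gφ ∧
      ∀ ψ g : ℝ → ℝ, UdRep Q d ψ g →
        Jd F d φd gφ ≤ Jd F d ψ g ∧
        (Jd F d ψ g = Jd F d φd gφ → Set.EqOn ψ φd (Set.Icc 0 d)) := by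
  obtain rfl : f = cubicForce Q κ := funext hf
  obtain rfl : F = truncatedPrimitive (cubicForce Q κ) 0 Q := funext hF
  exact stmt10_general hd.1 (isBarrierPotential_cubicForce (fun t ht => hκ t ht) hQ.le) hφd
end
end

section
/- Let c₁>c₂≥0 and s≥0. For i=1,2 let dᵢ∈(0,1] and φ_{cᵢ}∈C²((0,dᵢ))∩C¹([0,dᵢ]) satisfy φ_{cᵢ}''=f(φ_{cᵢ}) on (0,dᵢ), φ_{cᵢ}(0)=0, φ_{cᵢ}'(0)=cᵢ, with 0<φ_{cᵢ}<Q on (0,dᵢ) and φ_{cᵢ}(dᵢ)=Q. Suppose x̄₂ satisfies x̄₂−s∈(0,d₁), x̄₂∈(0,d₂) and φ_{c₁}(x̄₂−s)=φ_{c₂}(x̄₂). Then φ_{c₁}(x₂−s)>φ_{c₂}(x₂) for all x₂ with x̄₂<x₂<min{d₁+s, d₂}, and φ_{c₁}(x₂−s)<φ_{c₂}(x₂) for all x₂ with s<x₂<x̄₂. In particular, even after a shift, two such solutions have at most one intersection point in the region where both take values in (0,Q). -/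
open Real Set MeasureTheory

noncomputable section

open Filter Topology

/-!
If `F` is a primitive of `f` with `F(0) = 0`, a solution of `φ'' = f(φ)` with `φ(0) = 0` and
`φ'(0) = c` satisfies `φ'² = c² + 2 F(φ)`. When `F ≥ 0` and `c > 0`, the slope is therefore an
increasing function of `c` at any given height, whatever the time at which that height is reached.
So wherever a shift of `φ_{c₁}` meets `φ_{c₂}` it crosses from below to above, and two crossings in
the same direction cannot follow each other. For the given `f`, the function `φ̄₁` is itself the
solution with `c = 0`, so conservation of energy along it yields `F` explicitly: `F ∘ φ̄₁` is half
the square of the derivative of `φ̄₁`.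
-/

section Crossing

variable {u v u' v' : ℝ → ℝ} {a b z x : ℝ}

theorem lt_right_of_deriv_lt_of_eq
    (hu : ∀ y ∈ Ioo a b, HasDerivAt u (u' y) y) (hv : ∀ y ∈ Ioo a b, HasDerivAt v (v' y) y)
    (hlt : ∀ y ∈ Ioo a b, u y = v y → u' y < v' y)
    (haz : a < z) (hz : u z = v z) (hzx : z < x) (hxb : x < b) : u x < v x := by
  have hle : ∀ y ∈ Ico z b, u y ≤ v y := by
    intro y hy
    have hsub : Icc z y ⊆ Ioo a b := Icc_subset_Ioo haz hy.2
    have hsub' : Ico z y ⊆ Ioo a b := Ico_subset_Icc_self.trans hsub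
    exact image_le_of_deriv_right_lt_deriv_boundary'
      (fun t ht => (hu t (hsub ht)).continuousAt.continuousWithinAt)
      (fun t ht => (hu t (hsub' ht)).hasDerivWithinAt) hz.le
      (fun t ht => (hv t (hsub ht)).continuousAt.continuousWithinAt)
      (fun t ht => (hv t (hsub' ht)).hasDerivWithinAt)
      (fun t ht => hlt t (hsub' ht)) (right_mem_Icc.2 hy.1)
  refine (hle x ⟨hzx.le, hxb⟩).lt_of_ne fun heq => ?_
  have hx : x ∈ Ioo a b := ⟨haz.trans hzx, hxb⟩
  have hmin : IsLocalMin (fun y => v y - u y) x := by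
    filter_upwards [Ioo_mem_nhds hzx hxb] with y hy
    simpa only [heq, sub_self, sub_nonneg] using hle y (Ioo_subset_Ico_self hy)
  have hderiv : v' x - u' x = 0 := hmin.hasDerivAt_eq_zero ((hv x hx).sub (hu x hx))
  exact (sub_pos.2 (hlt x hx heq)).ne' hderiv

theorem lt_left_of_deriv_lt_of_eq
    (hu : ∀ y ∈ Ioo a b, HasDerivAt u (u' y) y) (hv : ∀ y ∈ Ioo a b, HasDerivAt v (v' y) y)
    (hlt : ∀ y ∈ Ioo a b, u y = v y → u' y < v' y)
    (hzb : z < b) (hz : u z = v z) (hax : a < x) (hxz : x < z) : v x < u x := by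
  have hneg : ∀ y ∈ Ioo (-b) (-a), -y ∈ Ioo a b := fun y hy =>
    ⟨lt_neg_of_lt_neg hy.2, neg_lt_of_neg_lt hy.1⟩
  have hderiv {w w' : ℝ → ℝ} (hw : ∀ y ∈ Ioo a b, HasDerivAt w (w' y) y) :
      ∀ y ∈ Ioo (-b) (-a), HasDerivAt (fun y => w (-y)) (-w' (-y)) y := fun y hy =>
    ((hw (-y) (hneg y hy)).comp y (hasDerivAt_neg y)).congr_deriv (mul_neg_one _)
  simpa only [neg_neg] using lt_right_of_deriv_lt_of_eq (hderiv hv) (hderiv hu)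
    (fun y hy heq => neg_lt_neg (hlt (-y) (hneg y hy) heq.symm))
    (neg_lt_neg hzb) (by simpa only [neg_neg] using hz.symm) (neg_lt_neg hxz) (neg_lt_neg hax)

end Crossing

/-- `F` is a nonnegative primitive of `f` on `(0, Q)`, normalised by `F(0⁺) = 0`. Up to sign, it is
the potential energy of the equation `φ'' = f(φ)`. -/
structure IsPotential (f F : ℝ → ℝ) (Q : ℝ) : Prop where
  hasDerivAt : ∀ u ∈ Ioo 0 Q, HasDerivAt F (f u) u
  nonneg : ∀ u ∈ Ioo 0 Q, 0 ≤ F u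
  tendsto_zero : Tendsto F (𝓝[>] 0) (𝓝 0)

/-- `φ` solves `φ'' = f(φ)` on `(0, d)` with values in `(0, Q)`, starting from height `0` with slope
`c`. The initial conditions are one-sided limits at `0`, so `φ 0` itself is irrelevant. -/
structure IsShootingSolution (f : ℝ → ℝ) (Q c d : ℝ) (φ : ℝ → ℝ) : Prop where
  hasDerivAt : ∀ x ∈ Ioo 0 d, HasDerivAt φ (deriv φ x) x
  hasDerivAt_deriv : ∀ x ∈ Ioo 0 d, HasDerivAt (deriv φ) (f (φ x)) x
  mapsTo : MapsTo φ (Ioo 0 d) (Ioo 0 Q)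
  tendsto_zero : Tendsto φ (𝓝[>] 0) (𝓝 0)
  tendsto_deriv : Tendsto (deriv φ) (𝓝[>] 0) (𝓝 c)

namespace IsShootingSolution

variable {f F φ : ℝ → ℝ} {Q c d x : ℝ}

theorem of_contDiffOn (hd : 0 < d) (hC1 : ContDiffOn ℝ 1 φ (Icc 0 d))
    (hC2 : ContDiffOn ℝ 2 φ (Ioo 0 d)) (hode : ∀ x ∈ Ioo 0 d, deriv (deriv φ) x = f (φ x))
    (h0 : φ 0 = 0) (hc : derivWithin φ (Icc 0 d) 0 = c) (hφ : MapsTo φ (Ioo 0 d) (Ioo 0 Q)) :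
    IsShootingSolution f Q c d φ where
  hasDerivAt x hx :=
    ((hC2.differentiableOn two_ne_zero).differentiableAt (isOpen_Ioo.mem_nhds hx)).hasDerivAt
  hasDerivAt_deriv x hx := by
    have hC1' : ContDiffOn ℝ 1 (deriv φ) (Ioo 0 d) :=
      hC2.deriv_of_isOpen isOpen_Ioo (by norm_num)
    rw [← hode x hx]
    exact ((hC1'.differentiableOn one_ne_zero).differentiableAt
      (isOpen_Ioo.mem_nhds hx)).hasDerivAt
  mapsTo := hφ
  tendsto_zero := by
    simpa only [h0] using (hC1.continuousOn 0 (left_mem_Icc.2 hd.le)).tendsto.mono_left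
      (nhdsWithin_le_of_mem (Icc_mem_nhdsGT hd))
  tendsto_deriv := by
    have hcont := (hC1.continuousOn_derivWithin (uniqueDiffOn_Icc hd) le_rfl) 0
      (left_mem_Icc.2 hd.le)
    have hlim : Tendsto (derivWithin φ (Icc 0 d)) (𝓝[>] 0) (𝓝 c) := by
      simpa only [hc] using hcont.tendsto.mono_left (nhdsWithin_le_of_mem (Icc_mem_nhdsGT hd))
    refine hlim.congr' ?_
    filter_upwards [Ioo_mem_nhdsGT hd] with y hy
    exact derivWithin_of_mem_nhds (Icc_mem_nhds hy.1 hy.2)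

theorem exists_energy_eq (h : IsShootingSolution f Q c d φ) (hF : IsPotential f F Q) :
    ∃ E, ∀ y ∈ Ioo 0 d, deriv φ y ^ 2 - 2 * F (φ y) = E := by
  have hE : ∀ y ∈ Ioo 0 d, HasDerivAt (fun y => deriv φ y ^ 2 - 2 * F (φ y)) 0 y := by
    intro y hy
    have hkin := (h.hasDerivAt_deriv y hy).fun_pow 2
    have hpot := ((hF.hasDerivAt _ (h.mapsTo hy)).comp y (h.hasDerivAt y hy)).const_mul 2
    exact (hkin.sub hpot).congr_deriv (by push_cast; ring)
  exact isOpen_Ioo.exists_is_const_of_deriv_eq_zero isPreconnected_Ioo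
    (fun y hy => (hE y hy).differentiableAt.differentiableWithinAt) (fun y hy => (hE y hy).deriv)

theorem sq_deriv_eq (h : IsShootingSolution f Q c d φ) (hF : IsPotential f F Q)
    (hx : x ∈ Ioo 0 d) : deriv φ x ^ 2 = c ^ 2 + 2 * F (φ x) := by
  obtain ⟨E, hE⟩ := h.exists_energy_eq hF
  have hmem : Ioo 0 d ∈ 𝓝[>] (0 : ℝ) := Ioo_mem_nhdsGT (hx.1.trans hx.2)
  have hφ : Tendsto φ (𝓝[>] 0) (𝓝[>] 0) := tendsto_nhdsWithin_iff.2
    ⟨h.tendsto_zero, by filter_upwards [hmem] with y hy using (h.mapsTo hy).1⟩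
  have hlim : Tendsto (fun y => deriv φ y ^ 2 - 2 * F (φ y)) (𝓝[>] 0) (𝓝 (c ^ 2 - 2 * 0)) :=
    (h.tendsto_deriv.pow 2).sub ((hF.tendsto_zero.comp hφ).const_mul 2)
  have hEc : c ^ 2 - 2 * 0 = E := tendsto_nhds_unique_of_eventuallyEq hlim tendsto_const_nhds
    (by filter_upwards [hmem] with y hy using hE y hy)
  linarith [hE x hx]

theorem deriv_pos (h : IsShootingSolution f Q c d φ) (hF : IsPotential f F Q) (hc : 0 < c)
    (hx : x ∈ Ioo 0 d) : 0 < deriv φ x := by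
  have hne : ∀ y ∈ Ioo 0 d, deriv φ y ≠ 0 := fun y hy => by
    have hpot := hF.nonneg _ (h.mapsTo hy)
    exact pow_ne_zero_iff two_ne_zero |>.1 (by rw [h.sq_deriv_eq hF hy]; positivity)
  obtain ⟨ξ, hξpos, hξ⟩ := ((h.tendsto_deriv.eventually_const_lt hc).and
    (Ioo_mem_nhdsGT (hx.1.trans hx.2))).exists
  by_contra! hneg
  obtain ⟨y, hy, hy0⟩ := isPreconnected_Ioo.intermediate_value hx hξ
    (fun y hy => (h.hasDerivAt_deriv y hy).continuousAt.continuousWithinAt) ⟨hneg, hξpos.le⟩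
  exact hne y hy hy0

theorem deriv_lt_deriv_of_eq {φ₁ φ₂ : ℝ → ℝ} {c₁ c₂ d₁ d₂ x₁ x₂ : ℝ}
    (h₁ : IsShootingSolution f Q c₁ d₁ φ₁) (h₂ : IsShootingSolution f Q c₂ d₂ φ₂)
    (hF : IsPotential f F Q) (hc : |c₂| < c₁) (hx₁ : x₁ ∈ Ioo 0 d₁) (hx₂ : x₂ ∈ Ioo 0 d₂)
    (heq : φ₂ x₂ = φ₁ x₁) : deriv φ₂ x₂ < deriv φ₁ x₁ := by
  have hc₁ : 0 < c₁ := (abs_nonneg c₂).trans_lt hc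
  refine lt_of_pow_lt_pow_left₀ 2 (h₁.deriv_pos hF hc₁ hx₁).le ?_
  calc deriv φ₂ x₂ ^ 2 = c₂ ^ 2 + 2 * F (φ₁ x₁) := by rw [h₂.sq_deriv_eq hF hx₂, heq]
    _ < c₁ ^ 2 + 2 * F (φ₁ x₁) := by grw [sq_lt_sq.2 (hc.trans_le (le_abs_self c₁))]
    _ = deriv φ₁ x₁ ^ 2 := (h₁.sq_deriv_eq hF hx₁).symm

end IsShootingSolution

theorem stmt12_general {f F φ₁ φ₂ : ℝ → ℝ} {Q c₁ c₂ d₁ d₂ s xb : ℝ} (hF : IsPotential f F Q)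
    (hc : |c₂| < c₁)
    (h₁ : IsShootingSolution f Q c₁ d₁ φ₁) (h₂ : IsShootingSolution f Q c₂ d₂ φ₂)
    (hxb₁ : xb - s ∈ Ioo 0 d₁) (hxb₂ : xb ∈ Ioo 0 d₂) (hint : φ₁ (xb - s) = φ₂ xb) :
    (∀ x, xb < x → x < min (d₁ + s) d₂ → φ₂ x < φ₁ (x - s)) ∧
    (∀ x, max s 0 < x → x < xb → φ₁ (x - s) < φ₂ x) := by
  have hmem₁ : ∀ x ∈ Ioo (max s 0) (min (d₁ + s) d₂), x - s ∈ Ioo 0 d₁ := fun x hx =>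
    ⟨sub_pos.2 (max_lt_iff.1 hx.1).1, sub_lt_iff_lt_add.2 (lt_min_iff.1 hx.2).1⟩
  have hmem₂ : ∀ x ∈ Ioo (max s 0) (min (d₁ + s) d₂), x ∈ Ioo 0 d₂ := fun x hx =>
    ⟨(max_lt_iff.1 hx.1).2, (lt_min_iff.1 hx.2).2⟩
  have hφ₁ : ∀ x ∈ Ioo (max s 0) (min (d₁ + s) d₂),
      HasDerivAt (fun x => φ₁ (x - s)) (deriv φ₁ (x - s)) x :=
    fun x hx => (h₁.hasDerivAt _ (hmem₁ x hx)).comp_sub_const x s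
  have hφ₂ : ∀ x ∈ Ioo (max s 0) (min (d₁ + s) d₂), HasDerivAt φ₂ (deriv φ₂ x) x :=
    fun x hx => h₂.hasDerivAt x (hmem₂ x hx)
  have hlt : ∀ x ∈ Ioo (max s 0) (min (d₁ + s) d₂), φ₂ x = φ₁ (x - s) →
      deriv φ₂ x < deriv φ₁ (x - s) :=
    fun x hx => h₁.deriv_lt_deriv_of_eq h₂ hF hc (hmem₁ x hx) (hmem₂ x hx)
  have hleft : max s 0 < xb := max_lt (sub_pos.1 hxb₁.1) hxb₂.1
  have hright : xb < min (d₁ + s) d₂ := lt_min (sub_lt_iff_lt_add.1 hxb₁.2) hxb₂.2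
  exact ⟨fun x => lt_right_of_deriv_lt_of_eq hφ₂ hφ₁ hlt hleft hint.symm,
    fun x => lt_left_of_deriv_lt_of_eq hφ₂ hφ₁ hlt hright hint.symm⟩

theorem hasDerivAt_half_sq_deriv_comp_leftInverse {ψ ψ' κ : ℝ → ℝ} {ψ'' t : ℝ}
    (hψ : HasStrictDerivAt ψ (ψ' t) t) (hψ' : HasDerivAt ψ' ψ'' t) (hne : ψ' t ≠ 0)
    (hκ : ∀ᶠ y in 𝓝 t, κ (ψ y) = y) :
    HasDerivAt (fun u => ψ' (κ u) ^ 2 / 2) ψ'' (ψ t) := by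
  have hκ' : HasDerivAt κ (ψ' t)⁻¹ (ψ t) := (hψ.to_local_left_inverse hne hκ).hasDerivAt
  rw [← hκ.self_of_nhds] at hψ'
  refine (((hψ'.comp _ hκ').fun_pow 2).div_const 2).congr_deriv ?_
  simp only [Function.comp_apply, hκ.self_of_nhds]
  push_cast
  field_simp

/-- The function `φ̄₁` of the paper; it solves `φ'' = f(φ)` with zero initial slope. -/
def smoothstep (Q t : ℝ) : ℝ := Q * (3 * t ^ 2 - 2 * t ^ 3)

/-- The derivative of `smoothstep Q`. Half its square, read at `t = κ u`, is the potential. -/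
def smoothstepSlope (Q t : ℝ) : ℝ := 6 * Q * (t * (1 - t))

section Smoothstep

variable {Q : ℝ} {κ : ℝ → ℝ}

theorem hasStrictDerivAt_smoothstep (Q t : ℝ) :
    HasStrictDerivAt (smoothstep Q) (smoothstepSlope Q t) t := by
  have h := ((((hasStrictDerivAt_id t).fun_pow 2).const_mul 3).sub
    (((hasStrictDerivAt_id t).fun_pow 3).const_mul 2)).const_mul Q
  exact h.congr_deriv (by simp only [smoothstepSlope, id]; push_cast; ring)

theorem hasDerivAt_smoothstepSlope (Q t : ℝ) :
    HasDerivAt (smoothstepSlope Q) (6 * Q * (1 - 2 * t)) t := by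
  have h := ((hasDerivAt_id t).mul ((hasDerivAt_id t).const_sub 1)).const_mul (6 * Q)
  exact h.congr_deriv (by simp only [id]; ring)

theorem Ioo_subset_image_smoothstep (Q : ℝ) : Ioo 0 Q ⊆ smoothstep Q '' Ioo 0 1 := by
  have hcont : ContinuousOn (smoothstep Q) (Icc 0 1) := fun t _ =>
    (hasStrictDerivAt_smoothstep Q t).hasDerivAt.continuousAt.continuousWithinAt
  have h := intermediate_value_Ioo zero_le_one hcont
  norm_num [smoothstep] at h
  exact h

theorem half_sq_smoothstepSlope_le {t : ℝ} (hQ : 0 < Q) (ht : t ∈ Ioo 0 1) :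
    smoothstepSlope Q t ^ 2 / 2 ≤ 18 * Q * smoothstep Q t := by
  have h₁ : 0 < 1 - t := sub_pos.2 ht.2
  have hle : (t * (1 - t)) ^ 2 ≤ 3 * t ^ 2 - 2 * t ^ 3 :=
    calc (t * (1 - t)) ^ 2 ≤ t ^ 2 :=
          pow_le_pow_left₀ (mul_pos ht.1 h₁).le
            (mul_le_of_le_one_right ht.1.le (sub_le_self 1 ht.1.le)) 2
      _ ≤ t ^ 2 + 2 * (t ^ 2 * (1 - t)) :=
          le_add_of_nonneg_right (mul_pos two_pos (mul_pos (pow_pos ht.1 2) h₁)).le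
      _ = 3 * t ^ 2 - 2 * t ^ 3 := by ring
  calc smoothstepSlope Q t ^ 2 / 2 = 18 * Q ^ 2 * (t * (1 - t)) ^ 2 := by
        rw [smoothstepSlope]; ring
    _ ≤ 18 * Q ^ 2 * (3 * t ^ 2 - 2 * t ^ 3) := by gcongr
    _ = 18 * Q * smoothstep Q t := by rw [smoothstep]; ring

theorem isPotential_half_sq_smoothstepSlope (hQ : 0 < Q)
    (hκ : ∀ t ∈ Icc 0 1, κ (smoothstep Q t) = t) :
    IsPotential (fun u => 6 * Q * (1 - 2 * κ u)) (fun u => smoothstepSlope Q (κ u) ^ 2 / 2) Q where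
  hasDerivAt u hu := by
    obtain ⟨t, ht, rfl⟩ := Ioo_subset_image_smoothstep Q hu
    have hne : smoothstepSlope Q t ≠ 0 :=
      (mul_pos (by positivity) (mul_pos ht.1 (sub_pos.2 ht.2))).ne'
    have hκt : ∀ᶠ y in 𝓝 t, κ (smoothstep Q y) = y := by
      filter_upwards [Icc_mem_nhds ht.1 ht.2] with y hy using hκ y hy
    simpa only [hκt.self_of_nhds] using hasDerivAt_half_sq_deriv_comp_leftInverse
      (hasStrictDerivAt_smoothstep Q t) (hasDerivAt_smoothstepSlope Q t) hne hκt
  nonneg u _ := by positivity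
  tendsto_zero := by
    have hlin : Tendsto (fun u => 18 * Q * u) (𝓝[>] 0) (𝓝 0) :=
      ((continuous_const_mul (18 * Q)).tendsto' 0 0 (mul_zero _)).mono_left nhdsWithin_le_nhds
    refine squeeze_zero' (Eventually.of_forall fun u => by positivity) ?_ hlin
    filter_upwards [Ioo_mem_nhdsGT hQ] with u hu
    obtain ⟨t, ht, rfl⟩ := Ioo_subset_image_smoothstep Q hu
    simpa only [hκ t (Ioo_subset_Icc_self ht)] using half_sq_smoothstepSlope_le hQ ht

end Smoothstep

/-- Even after a shift, two solutions of the initial value problem `φ'' = f(φ)`,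
`φ(0) = 0`, `φ'(0) = cᵢ` (with `c₁ > c₂ ≥ 0`, `0 < φ < Q` on `(0,dᵢ)` and
`φ(dᵢ) = Q`) have at most one intersection: if `φ_{c₁}(xb₂−s) = φ_{c₂}(xb₂)` then
`φ_{c₁}(·−s) > φ_{c₂}` to the right of `xb₂` and `φ_{c₁}(·−s) < φ_{c₂}` to the left. -/
theorem stmt12
    (Q : ℝ) (hQ : 0 < Q)
    (κ : ℝ → ℝ) (hκ : ∀ t ∈ Set.Icc (0 : ℝ) 1, κ (Q * (3 * t ^ 2 - 2 * t ^ 3)) = t)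
    (f : ℝ → ℝ) (hf : ∀ s : ℝ, f s = 6 * Q * (1 - 2 * κ s))
    (c₁ c₂ s : ℝ) (hc : c₂ < c₁) (hc₂ : 0 ≤ c₂) (hs : 0 ≤ s)
    (d₁ d₂ : ℝ) (hd₁ : d₁ ∈ Set.Ioc (0 : ℝ) 1) (hd₂ : d₂ ∈ Set.Ioc (0 : ℝ) 1)
    (φ₁ φ₂ : ℝ → ℝ)
    (hC1₁ : ContDiffOn ℝ 1 φ₁ (Set.Icc 0 d₁))
    (hC2₁ : ContDiffOn ℝ 2 φ₁ (Set.Ioo 0 d₁))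
    (hode₁ : ∀ x ∈ Set.Ioo (0 : ℝ) d₁, deriv (deriv φ₁) x = f (φ₁ x))
    (h0₁ : φ₁ 0 = 0) (hc₁' : derivWithin φ₁ (Set.Icc 0 d₁) 0 = c₁)
    (hb₁ : ∀ x ∈ Set.Ioo (0 : ℝ) d₁, 0 < φ₁ x ∧ φ₁ x < Q) (hend₁ : φ₁ d₁ = Q)
    (hC1₂ : ContDiffOn ℝ 1 φ₂ (Set.Icc 0 d₂))
    (hC2₂ : ContDiffOn ℝ 2 φ₂ (Set.Ioo 0 d₂))
    (hode₂ : ∀ x ∈ Set.Ioo (0 : ℝ) d₂, deriv (deriv φ₂) x = f (φ₂ x))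
    (h0₂ : φ₂ 0 = 0) (hc₂' : derivWithin φ₂ (Set.Icc 0 d₂) 0 = c₂)
    (hb₂ : ∀ x ∈ Set.Ioo (0 : ℝ) d₂, 0 < φ₂ x ∧ φ₂ x < Q) (hend₂ : φ₂ d₂ = Q)
    (xb : ℝ) (hxb₁ : xb - s ∈ Set.Ioo (0 : ℝ) d₁) (hxb₂ : xb ∈ Set.Ioo (0 : ℝ) d₂)
    (hint : φ₁ (xb - s) = φ₂ xb) :
    (∀ x : ℝ, xb < x → x < min (d₁ + s) d₂ → φ₂ x < φ₁ (x - s)) ∧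
    (∀ x : ℝ, s < x → x < xb → φ₁ (x - s) < φ₂ x) := by
  obtain rfl : f = fun u => 6 * Q * (1 - 2 * κ u) := funext hf
  simpa only [max_eq_left hs] using stmt12_general (isPotential_half_sq_smoothstepSlope hQ hκ)
    (by rwa [abs_of_nonneg hc₂]) (.of_contDiffOn hd₁.1 hC1₁ hC2₁ hode₁ h0₁ hc₁' hb₁)
    (.of_contDiffOn hd₂.1 hC1₂ hC2₂ hode₂ h0₂ hc₂' hb₂) hxb₁ hxb₂ hint
end
end
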